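/- In a two-block warehouse graph under no-reversal routing, assume subaisle 1 ∈ K1. Then the total vertical distance of the S-shape route r_S^1 satisfies: l_{r_S^1} − |K1 ∪ K2| · d = 2d if |K1| and |K2| are both odd; l_{r_S^1} − |K1 ∪ K2| · d = 0 if |K1| and |K2| are both even; and l_{r_S^1} − |K1 ∪ K2| · d = d if exactly one of |K1| and |K2| is odd. -/

import Mathlib

namespace TwoBlock

/-- Vertices of a two-block warehouse with `n` vertical aisles and three
horizontal cross-aisles (`0` = top, `1` = middle, `2` = bottom).  Each aisle
`i` is split by the middle cross-aisle into a top subaisle `(i,0)` and a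
bottom subaisle `(i,1)`; subaisle `(i,j)` contains `m i j + 1` picking
vertices.  `Sum.inl (i, j)` is the artificial vertex at aisle `i` on
cross-aisle `j`; `Sum.inr ⟨i, j, k⟩` is the `k`-th picking vertex (from north
to south) of subaisle `(i,j)`. -/
abbrev TBV (n : ℕ) (m : Fin n → Fin 2 → ℕ) : Type :=
  (Fin n × Fin 3) ⊕ ((i : Fin n) × (j : Fin 2) × Fin (m i j + 1))

variable {n : ℕ} {m : Fin n → Fin 2 → ℕ}

/-- the artificial vertex at aisle `i` on cross-aisle `j` -/
def art (i : Fin n) (j : Fin 3) : TBV n m := Sum.inl (i, j)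

/-- the `k`-th picking vertex of subaisle `(i,j)` -/
def pk (i : Fin n) (j : Fin 2) (k : Fin (m i j + 1)) : TBV n m := Sum.inr ⟨i, j, k⟩

/-- `v` is a picking vertex -/
def IsPick (v : TBV n m) : Prop := ∃ i j k, v = pk i j k

/-- the full path through subaisle `(i,j)` from its northern endpoint to its
southern endpoint -/
def subPath (i : Fin n) (j : Fin 2) : List (TBV n m) :=
  art i j.castSucc :: ((List.ofFn fun k : Fin (m i j + 1) => pk i j k) ++ [art i j.succ])

/-- `x` and `y` occur consecutively (in this order) in the list `l` -/
def adjIn {α : Type*} (l : List α) (x y : α) : Prop :=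
  ∃ p : ℕ, l[p]? = some x ∧ l[p + 1]? = some y

/-- adjacency in the two-block warehouse graph: neighboring artificial
vertices along each of the three cross-aisles, and consecutive vertices along
each subaisle path -/
def Adj (x y : TBV n m) : Prop :=
  (∃ (i i' : Fin n) (j : Fin 3), (i' : ℕ) = (i : ℕ) + 1 ∧
    ((x = art i j ∧ y = art i' j) ∨ (x = art i' j ∧ y = art i j))) ∨
  (∃ i j, adjIn (subPath i j) x y ∨ adjIn (subPath i j) y x)

/-- the length of a walk, written as a list of vertices: the sum of the
lengths of its edges, counted with multiplicity -/
noncomputable def pathLen {α : Type*} (len : α → α → ℝ) (r : List α) : ℝ :=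
  ((r.zip r.tail).map fun p => len p.1 p.2).sum

/-- a tour: a closed walk starting and ending at `s` -/
def IsTourFrom (s : TBV n m) (r : List (TBV n m)) : Prop :=
  r.head? = some s ∧ r.getLast? = some s ∧ r.Chain' Adj

/-- the full path through subaisle `(i,j)` in the direction `dir`
(`true` = from north to south, `false` = from south to north) -/
def dirPath (i : Fin n) (j : Fin 2) (dir : Bool) : List (TBV n m) :=
  if dir then subPath i j else (subPath i j).reverse

/-- the tour `r` performs a full traversal of subaisle `(i,j)` in direction
`dir` starting at position `q` -/
def TravAt (r : List (TBV n m)) (q : ℕ) (i : Fin n) (j : Fin 2) (dir : Bool) : Prop :=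
  dirPath i j dir <+: r.drop q

/-- `r` is a no-reversal tour: whenever it enters a subaisle it traverses it
completely from one endpoint to the other, i.e. every occurrence of a picking
vertex lies inside a contiguous full traversal of its subaisle -/
def NoReversal (r : List (TBV n m)) : Prop :=
  ∀ (p : ℕ) (i : Fin n) (j : Fin 2) (k : Fin (m i j + 1)),
    r[p]? = some (pk i j k) →
      ∃ q dir, TravAt r q i j dir ∧ q ≤ p ∧ p < q + (subPath (m := m) i j).length

/-- the tour `r` traverses subaisle `(i,j)` (at least once) -/
def Traverses (r : List (TBV n m)) (i : Fin n) (j : Fin 2) : Prop :=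
  ∃ q dir, TravAt r q i j dir

/-- `K1` (resp. `K2`) is the set of aisles whose top (resp. bottom) subaisle
contains a required picking vertex; `r` traverses every required subaisle at
least once -/
def TraversesAll (K1 K2 : Finset (Fin n)) (r : List (TBV n m)) : Prop :=
  (∀ a ∈ K1, Traverses r a 0) ∧ (∀ a ∈ K2, Traverses r a 1)

/-- `v` is a picking vertex (Boolean version) -/
def isPickV : TBV n m → Bool := fun v =>
  match v with
  | Sum.inr _ => true
  | Sum.inl _ => false

/-- the total vertical distance of a tour: the sum of the lengths of all
subaisle (vertical) edges it traverses, counted with multiplicity -/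
noncomputable def vertLen (len : TBV n m → TBV n m → ℝ) (r : List (TBV n m)) : ℝ :=
  ((r.zip r.tail).map fun p =>
    if isPickV p.1 || isPickV p.2 then len p.1 p.2 else 0).sum

/-- number of contiguous occurrences of `seg` in `r` -/
def occCount {α : Type*} [DecidableEq α] (seg r : List α) : ℕ :=
  ((List.range r.length).filter fun p => seg.isPrefixOf (r.drop p)).length

/-- the position of the first full traversal of subaisle `(i,j)` by the tour
`r` -/
noncomputable def firstPos (r : List (TBV n m)) (i : Fin n) (j : Fin 2) : ℕ :=
  sInf {q | ∃ dir, TravAt r q i j dir}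

/-- every full subaisle traversal performed by `r` is a traversal of a
required subaisle -/
def OnlyRequired (K1 K2 : Finset (Fin n)) (r : List (TBV n m)) : Prop :=
  ∀ q i j dir, TravAt r q i j dir → (j = 0 ∧ i ∈ K1) ∨ (j = 1 ∧ i ∈ K2)

/-- `r` is an S-shape route of type `r_S^1`: it only traverses required
subaisles; it first visits the subaisles of `K1 \ {i₀}` (where `i₀` is the
leftmost subaisle of `K1`) from left to right with alternating directions,
then the subaisles of `K2` from left to right with alternating directions,
and its final subaisle traversal is a traversal of `i₀`. -/
def SShape1 (K1 K2 : Finset (Fin n)) (hK1 : K1.Nonempty) (r : List (TBV n m)) : Prop :=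
  OnlyRequired K1 K2 r ∧
  ((K1.erase (K1.min' hK1)).sort (· ≤ ·)).Chain'
    (fun a a' => firstPos r a 0 < firstPos r a' 0) ∧
  (∀ a ∈ K1.erase (K1.min' hK1), ∀ b ∈ K2, firstPos r a 0 < firstPos r b 1) ∧
  ((K2.sort (· ≤ ·)).Chain' fun b b' => firstPos r b 1 < firstPos r b' 1) ∧
  (∃ fd : Fin n → Fin 2 → Bool,
    (∀ a ∈ K1, TravAt r (firstPos r a 0) a 0 (fd a 0)) ∧
    (∀ b ∈ K2, TravAt r (firstPos r b 1) b 1 (fd b 1)) ∧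
    ((K1.erase (K1.min' hK1)).sort (· ≤ ·)).Chain' (fun a a' => fd a 0 ≠ fd a' 0) ∧
    ((K2.sort (· ≤ ·)).Chain' fun b b' => fd b 1 ≠ fd b' 1)) ∧
  (∃ q dir, TravAt r q (K1.min' hK1) 0 dir ∧
    ∀ (q' : ℕ) (i' : Fin n) (j' : Fin 2) (dir' : Bool),
      TravAt r q' i' j' dir' → q' ≤ q)

/-- `r` is an S-shape route of type `r_S^2`: it only traverses required
subaisles, and it visits the subaisles of `K1` from left to right with
alternating directions and then the subaisles of `K2` from left to right with
alternating directions. -/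
def SShape2 (K1 K2 : Finset (Fin n)) (r : List (TBV n m)) : Prop :=
  OnlyRequired K1 K2 r ∧
  ((K1.sort (· ≤ ·)).Chain' fun a a' => firstPos r a 0 < firstPos r a' 0) ∧
  (∀ a ∈ K1, ∀ b ∈ K2, firstPos r a 0 < firstPos r b 1) ∧
  ((K2.sort (· ≤ ·)).Chain' fun b b' => firstPos r b 1 < firstPos r b' 1) ∧
  (∃ fd : Fin n → Fin 2 → Bool,
    (∀ a ∈ K1, TravAt r (firstPos r a 0) a 0 (fd a 0)) ∧
    (∀ b ∈ K2, TravAt r (firstPos r b 1) b 1 (fd b 1)) ∧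
    ((K1.sort (· ≤ ·)).Chain' fun a a' => fd a 0 ≠ fd a' 0) ∧
    ((K2.sort (· ≤ ·)).Chain' fun b b' => fd b 1 ≠ fd b' 1))

/-!
A closed walk crosses each block an even number of times, so a tour that traverses every subaisle
of `K1` and `K2` performs at least `|K| + |K| % 2` traversals in each block `K`. Independently, by
the triangle inequality its horizontal length is at least that of moving directly between the
aisles in the order of their first visits, which for a route of type `r_S^1` is `K1 \ {i₀}`, then
`K2`, then `i₀`. Serpentines that repeat the last subaisle of a block when parity demands it attain
both bounds at once, as a repetition costs no horizontal distance. Hence an optimal route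
exceeds `|K1 ∪ K2|` traversals by exactly `|K1| % 2 + |K2| % 2`.

If `K1 = {i₀}`, then `K1 \ {i₀}` is empty and subaisle `i₀` must also be used to reach the second
block: every tour then starts with it.
-/

section PathLength

variable {α : Type*} {f g : α → α → ℝ}

theorem pathLen_singleton (f : α → α → ℝ) (x : α) : pathLen f [x] = 0 := by
  simp [pathLen]

theorem pathLen_cons_cons (f : α → α → ℝ) (x y : α) (l : List α) :
    pathLen f (x :: y :: l) = f x y + pathLen f (y :: l) := by
  simp [pathLen]

theorem pathLen_append (f : α → α → ℝ) (l : List α) (x : α) (l' : List α) :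
    pathLen f (l ++ x :: l') = pathLen f (l ++ [x]) + pathLen f (x :: l') := by
  induction l with
  | nil => simp [pathLen_singleton]
  | cons a l ih =>
    cases l with
    | nil => simp [pathLen_cons_cons, pathLen_singleton]
    | cons b l => simp only [List.cons_append, pathLen_cons_cons] at ih ⊢; rw [ih, add_assoc]

theorem pathLen_reverse (hf : ∀ x y, f x y = f y x) (l : List α) :
    pathLen f l.reverse = pathLen f l := by
  induction l with
  | nil => rfl
  | cons x l ih =>
    cases l with
    | nil => rfl
    | cons y l =>
      rw [List.reverse_cons, List.reverse_cons, List.append_assoc, List.singleton_append,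
        pathLen_append, ← List.reverse_cons, ih]
      simp only [pathLen_cons_cons, pathLen_singleton, hf y x]
      ring

theorem pathLen_congr {l : List α} (h : l.IsChain fun x y => f x y = g x y) :
    pathLen f l = pathLen g l := by
  induction h with
  | nil => rfl
  | singleton => simp only [pathLen_singleton]
  | cons_cons hxy _ ih => rw [pathLen_cons_cons, pathLen_cons_cons, hxy, ih]

theorem pathLen_nonneg {l : List α} (h : l.IsChain fun x y => 0 ≤ f x y) : 0 ≤ pathLen f l := by
  induction h with
  | nil => rfl
  | singleton => rw [pathLen_singleton]
  | cons_cons hxy _ ih => rw [pathLen_cons_cons]; exact add_nonneg hxy ih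

theorem pathLen_append_dup {x : α} (hx : f x x = 0) (l l' : List α) :
    pathLen f (l ++ x :: x :: l') = pathLen f (l ++ x :: l') := by
  rw [pathLen_append, pathLen_cons_cons, hx, zero_add, ← pathLen_append]

end PathLength

section ListLemmas

variable {α : Type*}

theorem isChain_adjIn (l : List α) : l.IsChain (adjIn l) := by
  refine List.isChain_iff_getElem.2 fun k hk => ⟨k, ?_, ?_⟩ <;> simp

theorem isChain_cons_append_singleton {R : α → α → Prop} {l : List α} (hl : l ≠ [])
    (hR : ∀ v ∈ l, ∀ u, R u v ∧ R v u) (x y : α) : (x :: (l ++ [y])).IsChain R := by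
  induction l generalizing x with
  | nil => exact absurd rfl hl
  | cons v l ih =>
    have hv := hR v List.mem_cons_self
    refine List.isChain_cons_cons.2 ⟨(hv x).1, ?_⟩
    cases l with
    | nil => exact List.isChain_pair.2 (hv y).2
    | cons w l => exact ih (List.cons_ne_nil _ _) (fun u hu => hR u (List.mem_cons_of_mem _ hu)) v

theorem sublist_of_pairwise_lt_getElem? {k : α → ℕ} {l l' : List α}
    (hk : l.Pairwise fun a b => k a < k b) (hl' : ∀ a ∈ l, l'[k a]? = some a) : l.Sublist l' := by
  have hlt (i : Fin l.length) : k l[i] < l'.length :=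
    (List.getElem?_eq_some_iff.1 (hl' _ (List.getElem_mem i.2))).1
  refine List.sublist_iff_exists_fin_orderEmbedding_get_eq.2
    ⟨OrderEmbedding.ofStrictMono (fun i => ⟨k l[i], hlt i⟩) fun i i' hi =>
      List.pairwise_iff_getElem.1 hk i i' i.2 i'.2 hi, fun i => ?_⟩
  exact (List.getElem?_eq_some_iff.1 (hl' _ (List.getElem_mem i.2))).2.symm

theorem sublist_of_sublist_concat {l l' : List α} {a : α} (h : l.Sublist (l' ++ [a]))
    (hl : l.getLast? ≠ some a) : l.Sublist l' := by
  obtain ⟨l₁, l₂, rfl, h₁, h₂⟩ := List.sublist_append_iff.1 h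
  rcases List.sublist_singleton.1 h₂ with rfl | rfl
  · rwa [List.append_nil]
  · exact absurd List.getLast?_concat hl

theorem pairwise_idxOf_lt [BEq α] [LawfulBEq α] {l : List α} (hl : l.Nodup) {P : List α}
    (hP : ∀ a ∈ l, a ∉ P) (Q : List α) :
    l.Pairwise fun a b => (P ++ l ++ Q).idxOf a < (P ++ l ++ Q).idxOf b := by
  have hidx {a} (ha : a ∈ l) : (P ++ l ++ Q).idxOf a = P.length + l.idxOf a := by
    rw [List.append_assoc, List.idxOf_append_of_notMem (hP a ha), List.idxOf_append_of_mem ha]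
  refine List.pairwise_iff_getElem.2 fun i j hi hj hij => ?_
  rw [hidx (List.getElem_mem hi), hidx (List.getElem_mem hj), hl.idxOf_getElem, hl.idxOf_getElem]
  exact Nat.add_lt_add_left hij _

end ListLemmas

section SubaislePaths

@[simp]
theorem art_inj {i i' : Fin n} {l l' : Fin 3} :
    (art i l : TBV n m) = art i' l' ↔ i = i' ∧ l = l' := by
  simp [art]

@[simp]
theorem art_ne_pk (i : Fin n) (l : Fin 3) (i' : Fin n) (j : Fin 2) (k : Fin (m i' j + 1)) :
    (art i l : TBV n m) ≠ pk i' j k :=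
  Sum.inl_ne_inr

@[simp]
theorem pk_ne_art (i : Fin n) (l : Fin 3) (i' : Fin n) (j : Fin 2) (k : Fin (m i' j + 1)) :
    (pk i' j k : TBV n m) ≠ art i l :=
  Sum.inr_ne_inl

theorem subaisle_eq_of_pk_eq {i i' : Fin n} {j j' : Fin 2} {k : Fin (m i j + 1)}
    {k' : Fin (m i' j' + 1)} (h : (pk i j k : TBV n m) = pk i' j' k') : i = i' ∧ j = j' := by
  simp only [pk, Sum.inr.injEq, Sigma.mk.injEq] at h
  obtain ⟨rfl, h⟩ := h
  exact ⟨rfl, (Sigma.mk.inj (eq_of_heq h)).1⟩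

/-- The cross-aisle on which a traversal of a subaisle of block `j` in direction `dir` starts;
the traversal ends on cross-aisle `startLevel j !dir`. -/
def startLevel (j : Fin 2) (dir : Bool) : Fin 3 := if dir then j.castSucc else j.succ

theorem startLevel_injective (j : Fin 2) : Function.Injective (startLevel j) := by
  decide +revert

/-- The picking vertices of subaisle `(i, j)` in the order in which a traversal in direction `dir`
meets them. -/
def pickPath (i : Fin n) (j : Fin 2) (dir : Bool) : List (TBV n m) :=
  if dir then List.ofFn (pk i j) else (List.ofFn (pk i j)).reverse

theorem length_pickPath (i : Fin n) (j : Fin 2) (dir : Bool) :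
    (pickPath i j dir : List (TBV n m)).length = m i j + 1 := by
  cases dir <;> simp [pickPath]

theorem pickPath_ne_nil (i : Fin n) (j : Fin 2) (dir : Bool) :
    (pickPath i j dir : List (TBV n m)) ≠ [] :=
  List.ne_nil_of_length_eq_add_one (length_pickPath i j dir)

theorem mem_pickPath {i : Fin n} {j : Fin 2} {dir : Bool} {v : TBV n m} :
    v ∈ pickPath i j dir ↔ ∃ k, pk i j k = v := by
  cases dir <;> simp [pickPath, List.mem_ofFn, -List.ofFn_succ]

theorem dirPath_eq (i : Fin n) (j : Fin 2) (dir : Bool) :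
    (dirPath i j dir : List (TBV n m)) =
      art i (startLevel j dir) :: (pickPath i j dir ++ [art i (startLevel j !dir)]) := by
  cases dir <;> simp [dirPath, subPath, pickPath, startLevel]

theorem length_subPath (i : Fin n) (j : Fin 2) :
    (subPath i j : List (TBV n m)).length = m i j + 3 := by
  simp [subPath]

theorem isChain_pick_dirPath (i : Fin n) (j : Fin 2) (dir : Bool) :
    (dirPath i j dir : List (TBV n m)).IsChain fun x y => isPickV x || isPickV y := by
  rw [dirPath_eq]
  refine isChain_cons_append_singleton (pickPath_ne_nil i j dir) (fun v hv u => ?_) _ _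
  obtain ⟨k, rfl⟩ := mem_pickPath.1 hv
  simp [isPickV, pk]

theorem Adj.symm {x y : TBV n m} (h : Adj x y) : Adj y x := by
  unfold Adj at h ⊢
  grind

theorem isChain_adj_subPath (i : Fin n) (j : Fin 2) :
    (subPath i j : List (TBV n m)).IsChain Adj :=
  (isChain_adjIn _).imp fun _ _ h => Or.inr ⟨i, j, Or.inl h⟩

theorem isChain_adj_dirPath (i : Fin n) (j : Fin 2) (dir : Bool) :
    (dirPath i j dir : List (TBV n m)).IsChain Adj := by
  cases dir
  · exact List.isChain_reverse.2 ((isChain_adj_subPath i j).imp fun _ _ => Adj.symm)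
  · exact isChain_adj_subPath i j

theorem adj_art_iff {i i' : Fin n} {l l' : Fin 3} :
    Adj (art i l : TBV n m) (art i' l') ↔
      ((i' : ℕ) = i + 1 ∨ (i : ℕ) = i' + 1) ∧ l = l' := by
  have hsub (a : Fin n) (j : Fin 2) (x y : Fin n × Fin 3)
      (h : adjIn (subPath a j : List (TBV n m)) (art x.1 x.2) (art y.1 y.2)) : False := by
    obtain ⟨p, hx, hy⟩ := h
    obtain ⟨_, hx⟩ := List.getElem?_eq_some_iff.1 hx
    obtain ⟨hp', hy⟩ := List.getElem?_eq_some_iff.1 hy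
    have := List.isChain_iff_getElem.1 (isChain_pick_dirPath (m := m) a j true) p hp'
    simp [dirPath, hx, hy, isPickV, art] at this
  constructor
  · rintro (⟨a, a', j, ha, (⟨h, h'⟩ | ⟨h, h'⟩)⟩ | ⟨a, j, h | h⟩)
    · simp only [art_inj] at h h'; grind
    · simp only [art_inj] at h h'; grind
    · exact (hsub a j (i, l) (i', l') h).elim
    · exact (hsub a j (i', l') (i, l) h).elim
  · rintro ⟨h | h, rfl⟩
    · exact Or.inl ⟨i, i', l, h, Or.inl ⟨rfl, rfl⟩⟩
    · exact Or.inl ⟨i', i, l, h, Or.inr ⟨rfl, rfl⟩⟩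

end SubaislePaths

section Traversals

variable {l r : List (TBV n m)} {q : ℕ} {i : Fin n} {j : Fin 2} {dir : Bool}

theorem travAt_append_right : TravAt (l ++ r) (l.length + q) i j dir ↔ TravAt r q i j dir := by
  rw [TravAt, List.drop_length_add_append, TravAt]

theorem TravAt.getElem? (h : TravAt r q i j dir) : r[q]? = some (art i (startLevel j dir)) := by
  obtain ⟨z, hz⟩ := h
  rw [← add_zero q, ← List.getElem?_drop, ← hz, dirPath_eq]
  rfl

theorem TravAt.getElem?_add (h : TravAt r q i j dir) {t : ℕ} (ht : t ≤ m i j) :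
    ∃ k, r[q + (t + 1)]? = some (pk i j k) := by
  obtain ⟨z, hz⟩ := h
  have ht' : t < (pickPath i j dir : List (TBV n m)).length := by
    rw [length_pickPath]; exact Nat.lt_succ_of_le ht
  obtain ⟨k, hk⟩ := mem_pickPath.1 (List.getElem_mem ht')
  refine ⟨k, ?_⟩
  rw [← List.getElem?_drop, ← hz, dirPath_eq, List.cons_append, List.getElem?_cons_succ,
    List.append_assoc, List.getElem?_append_left ht', List.getElem?_eq_getElem ht', hk]

theorem travAt_unique {i' : Fin n} {j' : Fin 2} {dir' : Bool} (h : TravAt r q i j dir)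
    (h' : TravAt r q i' j' dir') : i' = i ∧ j' = j ∧ dir' = dir := by
  obtain ⟨k, hk⟩ := h.getElem?_add (Nat.zero_le _)
  obtain ⟨k', hk'⟩ := h'.getElem?_add (Nat.zero_le _)
  obtain ⟨rfl, rfl⟩ := subaisle_eq_of_pk_eq (Option.some.inj (hk'.symm.trans hk))
  have hart := Option.some.inj (h'.getElem?.symm.trans h.getElem?)
  exact ⟨rfl, rfl, startLevel_injective _ (art_inj.1 hart).2⟩

end Traversals

/-- A full traversal of a subaisle, recorded as the subaisle together with the direction. -/
abbrev Visit (n : ℕ) : Type := (Fin n × Fin 2) × Bool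

/-- `RouteTo i' l' i l r V`: the walk `art i l :: r` ends in `art i' l'` and consists of
cross-aisle edges and full subaisle traversals, the latter being listed in order by `V`. -/
inductive RouteTo (i' : Fin n) (l' : Fin 3) :
    Fin n → Fin 3 → List (TBV n m) → List (Visit n) → Prop
  | nil : RouteTo i' l' i' l' [] []
  | horizontal {i₁ i₂ : Fin n} {l : Fin 3} {r : List (TBV n m)} {V : List (Visit n)}
      (h : (i₂ : ℕ) = i₁ + 1 ∨ (i₁ : ℕ) = i₂ + 1) (hr : RouteTo i' l' i₂ l r V) :
      RouteTo i' l' i₁ l (art i₂ l :: r) V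
  | traverse {i : Fin n} (j : Fin 2) (dir : Bool) {r : List (TBV n m)} {V : List (Visit n)}
      (hr : RouteTo i' l' i (startLevel j !dir) r V) :
      RouteTo i' l' i (startLevel j dir) (pickPath i j dir ++ art i (startLevel j !dir) :: r)
        (((i, j), dir) :: V)

section RouteToTour

variable {i i' : Fin n} {l l' : Fin 3} {r : List (TBV n m)} {V : List (Visit n)}

theorem RouteTo.getLast? (h : RouteTo i' l' i l r V) :
    (art i l :: r).getLast? = some (art i' l') := by
  induction h with
  | nil => rfl
  | horizontal _ _ ih => rw [List.getLast?_cons_cons, ih]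
  | traverse j dir _ ih => rw [← List.cons_append, List.getLast?_append, ih, Option.some_or]

theorem RouteTo.isChain_adj (h : RouteTo i' l' i l r V) : (art i l :: r).IsChain Adj := by
  induction h with
  | nil => exact List.isChain_singleton _
  | horizontal h _ ih => exact List.isChain_cons_cons.2 ⟨adj_art_iff.2 ⟨h, rfl⟩, ih⟩
  | @traverse i j dir _ _ _ ih =>
    have hdir := isChain_adj_dirPath (m := m) i j dir
    rw [dirPath_eq, ← List.cons_append] at hdir
    exact List.isChain_split.2 ⟨hdir, ih⟩

theorem RouteTo.isTourFrom (h : RouteTo i l i l r V) : IsTourFrom (art i l) (art i l :: r) :=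
  ⟨rfl, h.getLast?, h.isChain_adj⟩

theorem travAt_traverse (i : Fin n) (j : Fin 2) (dir : Bool) (r : List (TBV n m)) :
    TravAt (art i (startLevel j dir) :: (pickPath i j dir ++ art i (startLevel j !dir) :: r))
      0 i j dir := by
  simp [TravAt, dirPath_eq]

theorem NoReversal.append {u : List (TBV n m)} (hr : NoReversal r)
    (hu : ∀ p < u.length, ∀ i j k, u[p]? = some (pk i j k) →
      ∃ q dir, TravAt (u ++ r) q i j dir ∧ q ≤ p ∧ p < q + (subPath (m := m) i j).length) :
    NoReversal (u ++ r) := by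
  intro p i j k hp
  rcases lt_or_ge p u.length with h | h
  · exact hu p h i j k (by rwa [List.getElem?_append_left h] at hp)
  · rw [List.getElem?_append_right h] at hp
    obtain ⟨q, dir, hq, hqp, hpq⟩ := hr _ i j k hp
    exact ⟨u.length + q, dir, travAt_append_right.2 hq, by lia, by lia⟩

theorem NoReversal.of_append {u : List (TBV n m)} (h : NoReversal (u ++ art i l :: r)) :
    NoReversal (art i l :: r) := by
  intro p a j k hp
  have hu : (u ++ art i l :: r)[u.length + p]? = some (pk a j k) := by
    rw [List.getElem?_append_right (Nat.le_add_right _ _), Nat.add_sub_cancel_left, hp]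
  obtain ⟨q, dir, hq, hqp, hpq⟩ := h _ a j k hu
  rw [length_subPath] at hpq
  rcases le_or_gt u.length q with huq | huq
  · obtain ⟨q, rfl⟩ := Nat.exists_eq_add_of_le huq
    exact ⟨q, dir, travAt_append_right.1 hq, by lia, by rw [length_subPath]; lia⟩
  · have hp0 : p ≠ 0 := by rintro rfl; simp at hp
    obtain ⟨k', hk'⟩ := hq.getElem?_add (show u.length - q - 1 ≤ m a j by lia)
    rw [show q + (u.length - q - 1 + 1) = u.length by lia] at hk'
    simp at hk'

theorem RouteTo.noReversal (h : RouteTo i' l' i l r V) : NoReversal (art i l :: r) := by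
  induction h with
  | nil =>
    intro p a j k hp
    simpa using List.mem_of_getElem? hp
  | @horizontal i₁ _ l _ _ _ _ ih =>
    refine NoReversal.append (u := [art i₁ l]) ih fun p hp a j k hk => ?_
    obtain rfl : p = 0 := by simpa using hp
    simp at hk
  | @traverse i j dir r _ _ ih =>
    refine NoReversal.append (u := art i (startLevel j dir) :: pickPath i j dir) ih
      fun p hp a j' k hk => ?_
    have hmem : pk a j' k ∈ (pickPath i j dir : List (TBV n m)) :=
      (List.mem_cons.1 (List.mem_of_getElem? hk)).resolve_left (pk_ne_art _ _ _ _ _)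
    obtain ⟨k', hk'⟩ := mem_pickPath.1 hmem
    obtain ⟨rfl, rfl⟩ := subaisle_eq_of_pk_eq hk'
    refine ⟨0, dir, travAt_traverse i j dir r, Nat.zero_le _, ?_⟩
    rw [List.length_cons, length_pickPath] at hp
    rw [length_subPath]
    lia

theorem NoReversal.exists_traversal {a : Fin n} {j : Fin 2} {k : Fin (m a j + 1)}
    (h : NoReversal (art i l :: pk a j k :: r)) :
    a = i ∧ ∃ dir z, l = startLevel j dir ∧
      pk a j k :: r = pickPath a j dir ++ art a (startLevel j !dir) :: z := by
  obtain ⟨q, dir, hq, hq1, -⟩ := h 1 a j k rfl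
  obtain rfl | rfl : q = 0 ∨ q = 1 := by lia
  · obtain ⟨z, hz⟩ := hq
    rw [dirPath_eq, List.drop_zero, List.cons_append, List.cons.injEq, art_inj,
      List.append_assoc, List.singleton_append] at hz
    exact ⟨hz.1.1, dir, z, hz.1.2.symm, hz.2.symm⟩
  · have := hq.getElem?
    simp at this

theorem exists_routeTo (hchain : (art i l :: r).IsChain Adj)
    (hlast : (art i l :: r).getLast? = some (art i' l')) (hrev : NoReversal (art i l :: r)) :
    ∃ V, RouteTo i' l' i l r V := by
  induction hN : r.length using Nat.strong_induction_on generalizing i l r with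
  | _ N ih =>
  subst hN
  match r with
  | [] =>
    obtain ⟨rfl, rfl⟩ := art_inj.1 (Option.some.inj hlast)
    exact ⟨[], .nil⟩
  | Sum.inl (i₂, l₂) :: r =>
    obtain ⟨hadj, hchain⟩ := List.isChain_cons_cons.1 hchain
    obtain ⟨hi, rfl⟩ := adj_art_iff.1 hadj
    obtain ⟨V, hV⟩ := ih r.length (Nat.lt_succ_self _) hchain hlast
      (NoReversal.of_append (u := [art i l]) hrev) rfl
    exact ⟨V, .horizontal hi hV⟩
  | Sum.inr ⟨a, j, k⟩ :: r =>
    obtain ⟨rfl, dir, z, rfl, hz⟩ := NoReversal.exists_traversal hrev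
    rw [show Sum.inr ⟨a, j, k⟩ = (pk a j k : TBV n m) from rfl, hz] at hchain hlast hrev ih ⊢
    rw [← List.cons_append] at hchain hlast hrev
    obtain ⟨V, hV⟩ := ih z.length (by simp; lia) (List.isChain_split.1 hchain).2
      (by rwa [List.getLast?_append_cons] at hlast) hrev.of_append rfl
    exact ⟨_, .traverse j dir hV⟩

end RouteToTour

section Timetables

/-- A strictly increasing timetable for the traversals performed by the walk `r`: the `k`-th entry
of `V` is the traversal starting at position `pos k`, and there are no others. -/
structure IsTimetable (r : List (TBV n m)) (V : List (Visit n)) (pos : ℕ → ℕ) : Prop where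
  strictMono : StrictMono pos
  travAt_iff (q : ℕ) (i : Fin n) (j : Fin 2) (dir : Bool) :
    TravAt r q i j dir ↔ ∃ k, V[k]? = some ((i, j), dir) ∧ pos k = q

variable {i i' : Fin n} {j : Fin 2} {l l' : Fin 3} {dir : Bool} {r : List (TBV n m)}
  {V : List (Visit n)} {pos : ℕ → ℕ}

theorem IsTimetable.append (h : IsTimetable r V pos) {u : List (TBV n m)}
    (hu : ∀ q < u.length, ∀ a c b, ¬ TravAt (u ++ r) q a c b) :
    IsTimetable (u ++ r) V fun k => u.length + pos k where
  strictMono := h.strictMono.const_add _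
  travAt_iff q a c b := by
    constructor
    · intro hq
      obtain ⟨q, rfl⟩ := Nat.exists_eq_add_of_le (not_lt.1 fun hlt => hu q hlt a c b hq)
      obtain ⟨k, hk, rfl⟩ := (h.travAt_iff _ _ _ _).1 (travAt_append_right.1 hq)
      exact ⟨k, hk, rfl⟩
    · rintro ⟨k, hk, rfl⟩
      exact travAt_append_right.2 ((h.travAt_iff _ _ _ _).2 ⟨k, hk, rfl⟩)

theorem IsTimetable.append_traversal (h : IsTimetable r V pos) {u : List (TBV n m)} {v : Visit n}
    (hv : TravAt (u ++ r) 0 v.1.1 v.1.2 v.2) (hu : u ≠ [])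
    (hu0 : ∀ q < u.length, ∀ a c b, TravAt (u ++ r) q a c b → q = 0) :
    IsTimetable (u ++ r) (v :: V) fun k => k.casesOn 0 fun k => u.length + pos k where
  strictMono := strictMono_nat_of_lt_succ fun
    | 0 => Nat.add_pos_left (List.length_pos_of_ne_nil hu) _
    | k + 1 => Nat.add_lt_add_left (h.strictMono k.lt_succ_self) _
  travAt_iff q a c b := by
    constructor
    · intro hq
      rcases lt_or_ge q u.length with hlt | hge
      · obtain rfl := hu0 q hlt a c b hq
        obtain ⟨rfl, rfl, rfl⟩ := travAt_unique hv hq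
        exact ⟨0, rfl, rfl⟩
      · obtain ⟨q, rfl⟩ := Nat.exists_eq_add_of_le hge
        obtain ⟨k, hk, rfl⟩ := (h.travAt_iff _ _ _ _).1 (travAt_append_right.1 hq)
        exact ⟨k + 1, hk, rfl⟩
    · rintro ⟨_ | k, hk, rfl⟩
      · obtain rfl := Option.some.inj hk
        exact hv
      · exact travAt_append_right.2 ((h.travAt_iff _ _ _ _).2 ⟨k, hk, rfl⟩)

theorem RouteTo.exists_isTimetable (h : RouteTo i' l' i l r V) :
    ∃ pos, IsTimetable (art i l :: r) V pos := by
  induction h with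
  | nil =>
    refine ⟨id, strictMono_id, fun q a c b => ⟨fun hq => ?_, by simp⟩⟩
    obtain ⟨k, hk⟩ := hq.getElem?_add (Nat.zero_le _)
    simp at hk
  | @horizontal i₁ _ l _ _ _ _ ih =>
    obtain ⟨pos, hpos⟩ := ih
    refine ⟨_, hpos.append (u := [art i₁ l]) fun q hq a c b htrav => ?_⟩
    obtain rfl : q = 0 := by simpa using hq
    obtain ⟨k, hk⟩ := htrav.getElem?_add (Nat.zero_le _)
    simp at hk
  | @traverse i j dir r _ _ ih =>
    obtain ⟨pos, hpos⟩ := ih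
    have hfirst := travAt_traverse (m := m) i j dir r
    refine ⟨_, hpos.append_traversal (u := art i (startLevel j dir) :: pickPath i j dir)
      (v := ((i, j), dir)) hfirst (List.cons_ne_nil _ _) fun q hq a c b htrav => ?_⟩
    by_contra hq0
    rw [List.length_cons, length_pickPath] at hq
    obtain ⟨k, hk⟩ := hfirst.getElem?_add (show q - 1 ≤ m i j by lia)
    rw [zero_add, Nat.sub_add_cancel (Nat.pos_of_ne_zero hq0)] at hk
    exact art_ne_pk _ _ _ _ _ (Option.some.inj (htrav.getElem?.symm.trans hk))

/-- The direction of the first traversal of subaisle `x` in `V`, by default `true`. -/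
def firstDir (V : List (Visit n)) (x : Fin n × Fin 2) : Bool := (V.lookup x).getD true

theorem getElem?_idxOf_map_fst {V : List (Visit n)} {x : Fin n × Fin 2}
    (hx : x ∈ V.map Prod.fst) : V[(V.map Prod.fst).idxOf x]? = some (x, firstDir V x) := by
  induction V with
  | nil => simp at hx
  | cons v V ih =>
    obtain ⟨y, b⟩ := v
    rcases eq_or_ne y x with rfl | hy
    · simp [firstDir]
    · rw [List.map_cons, List.idxOf_cons_ne _ hy, List.getElem?_cons_succ,
        ih (by simpa [hy.symm] using hx), firstDir, firstDir, List.lookup_cons,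
        beq_false_of_ne hy.symm]

theorem IsTimetable.traverses_iff (h : IsTimetable r V pos) :
    Traverses r i j ↔ (i, j) ∈ V.map Prod.fst := by
  constructor
  · rintro ⟨q, dir, hq⟩
    obtain ⟨k, hk, -⟩ := (h.travAt_iff _ _ _ _).1 hq
    exact List.mem_map_of_mem (List.mem_of_getElem? hk)
  · intro hx
    exact ⟨_, _, (h.travAt_iff _ _ _ _).2 ⟨_, getElem?_idxOf_map_fst hx, rfl⟩⟩

theorem IsTimetable.firstPos_eq (h : IsTimetable r V pos) (hx : (i, j) ∈ V.map Prod.fst) :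
    firstPos r i j = pos ((V.map Prod.fst).idxOf (i, j)) := by
  refine IsLeast.csInf_eq
    ⟨⟨_, (h.travAt_iff _ _ _ _).2 ⟨_, getElem?_idxOf_map_fst hx, rfl⟩⟩, ?_⟩
  rintro q ⟨dir, hq⟩
  obtain ⟨k, hk, rfl⟩ := (h.travAt_iff _ _ _ _).1 hq
  refine h.strictMono.monotone (not_lt.1 fun hlt => ?_)
  have := List.not_of_lt_findIdx hlt
  obtain ⟨_, hk⟩ := List.getElem?_eq_some_iff.1 hk
  simp [hk] at this

theorem IsTimetable.firstPos_lt_iff {j' : Fin 2} (h : IsTimetable r V pos)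
    (hx : (i, j) ∈ V.map Prod.fst) (hy : (i', j') ∈ V.map Prod.fst) :
    firstPos r i j < firstPos r i' j' ↔
      (V.map Prod.fst).idxOf (i, j) < (V.map Prod.fst).idxOf (i', j') := by
  rw [h.firstPos_eq hx, h.firstPos_eq hy, h.strictMono.lt_iff_lt]

theorem IsTimetable.travAt_firstPos (h : IsTimetable r V pos) (hx : (i, j) ∈ V.map Prod.fst) :
    TravAt r (firstPos r i j) i j (firstDir V (i, j)) :=
  (h.travAt_iff _ _ _ _).2 ⟨_, getElem?_idxOf_map_fst hx, (h.firstPos_eq hx).symm⟩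

theorem IsTimetable.exists_last_iff (h : IsTimetable r V pos) :
    (∃ q dir, TravAt r q i j dir ∧ ∀ q' i' j' dir', TravAt r q' i' j' dir' → q' ≤ q) ↔
      ∃ W dir, V = W ++ [((i, j), dir)] := by
  constructor
  · rintro ⟨q, dir, hq, hlast⟩
    obtain ⟨k, hk, rfl⟩ := (h.travAt_iff _ _ _ _).1 hq
    have hkV := (List.getElem?_eq_some_iff.1 hk).1
    have hle : V.length - 1 ≤ k := h.strictMono.le_iff_le.1 <| hlast _ _ _ _ <|
      (h.travAt_iff _ _ _ _).2 ⟨_, List.getElem?_eq_getElem (by lia), rfl⟩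
    obtain ⟨W, hW⟩ := List.getLast?_eq_some_iff.1 <|
      (List.getLast?_eq_getElem? (l := V)).trans ((by lia : V.length - 1 = k) ▸ hk)
    exact ⟨W, dir, hW⟩
  · rintro ⟨W, dir, rfl⟩
    refine ⟨pos W.length, dir, (h.travAt_iff _ _ _ _).2 ⟨_, by simp, rfl⟩, fun _ _ _ _ hq' => ?_⟩
    obtain ⟨k, hk, rfl⟩ := (h.travAt_iff _ _ _ _).1 hq'
    have hk := (List.getElem?_eq_some_iff.1 hk).1
    rw [List.length_append, List.length_singleton] at hk
    exact h.strictMono.monotone (Nat.le_of_lt_succ hk)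

end Timetables

section Parity

variable {l l' : Fin 3} {V W : List (Visit n)}

/-- The traversals `V` can be performed in this order by a walk from cross-aisle `l` to
cross-aisle `l'` that otherwise stays on the cross-aisles. -/
def Connects (l' : Fin 3) : Fin 3 → List (Visit n) → Prop
  | l, [] => l = l'
  | l, v :: V => l = startLevel v.1.2 v.2 ∧ Connects l' (startLevel v.1.2 !v.2) V

theorem Connects.append {l₂ : Fin 3} (hV : Connects l₂ l V) (hW : Connects l' l₂ W) :
    Connects l' l (V ++ W) := by
  induction V generalizing l with
  | nil => obtain rfl := hV; exact hW
  | cons v V ih => exact ⟨hV.1, ih hV.2⟩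

theorem RouteTo.connects {i i' : Fin n} {r : List (TBV n m)} (h : RouteTo i' l' i l r V) :
    Connects l' l V := by
  induction h with
  | nil => rfl
  | horizontal _ _ ih => exact ih
  | traverse j dir _ ih => exact ⟨rfl, ih⟩

theorem startLevel_le_castSucc_iff (j c : Fin 2) (dir : Bool) :
    (startLevel c dir ≤ j.castSucc ↔ startLevel c (!dir) ≤ j.castSucc) ↔ c ≠ j := by
  decide +revert

/- Exactly the traversals of block `j` cross the line between cross-aisles `j` and `j + 1`. -/
theorem Connects.even_countP_iff (h : Connects l' l V) (j : Fin 2) :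
    Even (V.countP fun v => v.1.2 = j) ↔ (l ≤ j.castSucc ↔ l' ≤ j.castSucc) := by
  induction V generalizing l with
  | nil => obtain rfl := h; simp
  | cons v V ih =>
    obtain ⟨rfl, hV⟩ := h
    have hside := startLevel_le_castSucc_iff j v.1.2 v.2
    have := ih hV
    rw [List.countP_cons]
    split_ifs with hv
    · rw [Nat.even_add_one, this]
      grind
    · rw [add_zero, this]
      grind

theorem card_le_countP {K : Finset (Fin n)} {j : Fin 2} (h : ∀ a ∈ K, (a, j) ∈ V.map Prod.fst) :
    K.card ≤ V.countP fun v => v.1.2 = j := by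
  have hsub : K ⊆ ((V.filter fun v => v.1.2 = j).map fun v => v.1.1).toFinset := by
    intro a ha
    obtain ⟨v, hv, hva⟩ := List.mem_map.1 (h a ha)
    simp only [List.mem_toFinset, List.mem_map, List.mem_filter]
    exact ⟨v, ⟨hv, by simp [hva]⟩, by rw [hva]⟩
  calc K.card ≤ _ := Finset.card_le_card hsub
    _ ≤ _ := List.toFinset_card_le _
    _ = _ := by rw [List.length_map, List.countP_eq_length_filter]

theorem add_mod_two_le_of_even {a b : ℕ} (hab : a ≤ b) (hb : Even b) : a + a % 2 ≤ b := by
  obtain ⟨c, rfl⟩ := hb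
  lia

theorem Connects.le_length (h : Connects l l V) {K1 K2 : Finset (Fin n)}
    (h1 : ∀ a ∈ K1, (a, 0) ∈ V.map Prod.fst) (h2 : ∀ a ∈ K2, (a, 1) ∈ V.map Prod.fst) :
    K1.card + K1.card % 2 + (K2.card + K2.card % 2) ≤ V.length := by
  have hlen : V.length = (V.countP fun v => v.1.2 = 0) + V.countP fun v => v.1.2 = 1 := by
    rw [List.length_eq_countP_add_countP fun v => decide (v.1.2 = 0)]
    congr 2 with v
    rw [decide_eq_decide, decide_eq_true_iff]
    lia
  rw [hlen]
  exact add_le_add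
    (add_mod_two_le_of_even (card_le_countP h1) ((h.even_countP_iff 0).2 Iff.rfl))
    (add_mod_two_le_of_even (card_le_countP h2) ((h.even_countP_iff 1).2 Iff.rfl))

end Parity

section Metric

/-- The horizontal distance covered when visiting the aisles of `L` in this order, where `X i` is
the horizontal coordinate of aisle `i`. -/
noncomputable def aislePathLen (X : Fin n → ℝ) (L : List (Fin n)) : ℝ :=
  pathLen (fun a b => dist (X a) (X b)) L

/-- The edge lengths `len` are those of a rectangular grid in which aisle `i` has horizontal
coordinate `X i` and every subaisle has length `d`. -/
structure IsGridMetric (len : TBV n m → TBV n m → ℝ) (X : Fin n → ℝ) (d : ℝ) : Prop where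
  monotone : Monotone X
  len_art {i₁ i₂ : Fin n} (l : Fin 3) (h : (i₂ : ℕ) = i₁ + 1 ∨ (i₁ : ℕ) = i₂ + 1) :
    len (art i₁ l) (art i₂ l) = dist (X i₁) (X i₂)
  pathLen_dirPath (i : Fin n) (j : Fin 2) (dir : Bool) : pathLen len (dirPath i j dir) = d

variable {len : TBV n m → TBV n m → ℝ} {X : Fin n → ℝ} {d : ℝ}

theorem exists_isGridMetric (hsymm : ∀ x y, len x y = len y x)
    (hnonneg : ∀ x y, Adj x y → 0 ≤ len x y)
    (hcross : ∀ i i' : Fin n, (i' : ℕ) = (i : ℕ) + 1 →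
      ∀ j j' : Fin 3, len (art i j) (art i' j) = len (art i j') (art i' j'))
    (hvert : ∀ i j, pathLen len (subPath i j) = d) : ∃ X, IsGridMetric len X d := by
  let w (k : ℕ) : ℝ :=
    if h : k + 1 < n then len (art ⟨k, Nat.lt_of_succ_lt h⟩ 0) (art ⟨k + 1, h⟩ 0) else 0
  have hw (k : ℕ) : 0 ≤ w k := by
    dsimp only [w]
    split_ifs
    · exact hnonneg _ _ (adj_art_iff.2 ⟨Or.inl rfl, rfl⟩)
    · exact le_rfl
  let X (i : Fin n) : ℝ := ∑ k ∈ Finset.range i, w k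
  have hstep (i i' : Fin n) (h : (i' : ℕ) = i + 1) (l : Fin 3) :
      len (art i l) (art i' l) = dist (X i) (X i') := by
    obtain ⟨i, hi⟩ := i
    obtain ⟨_, hi'⟩ := i'
    obtain rfl := h
    rw [dist_comm, Real.dist_eq]
    simp only [X, Finset.sum_range_succ, add_sub_cancel_left, abs_of_nonneg (hw i)]
    simp only [w, dif_pos hi']
    exact hcross _ _ rfl _ _
  refine ⟨X, ?_, ?_, ?_⟩
  · intro i i' h
    exact Finset.sum_le_sum_of_subset_of_nonneg (Finset.range_mono h) fun k _ _ => hw k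
  · rintro i₁ i₂ l (h | h)
    · exact hstep i₁ i₂ h l
    · rw [hsymm, dist_comm, hstep i₂ i₁ h l]
  · rintro i j (_ | _)
    · exact (pathLen_reverse hsymm _).trans (hvert i j)
    · exact hvert i j

theorem pathLen_traverse (f : TBV n m → TBV n m → ℝ) (i : Fin n) (j : Fin 2) (dir : Bool)
    (r : List (TBV n m)) :
    pathLen f (art i (startLevel j dir) :: (pickPath i j dir ++ art i (startLevel j !dir) :: r)) =
      pathLen f (dirPath i j dir) + pathLen f (art i (startLevel j !dir) :: r) := by
  rw [dirPath_eq, ← List.cons_append, pathLen_append, List.cons_append]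

theorem aislePathLen_cons_le (X : Fin n → ℝ) (a b : Fin n) (L : List (Fin n)) :
    aislePathLen X (a :: L) ≤ dist (X a) (X b) + aislePathLen X (b :: L) := by
  cases L with
  | nil => simp [aislePathLen, pathLen_singleton]
  | cons c L =>
    simp only [aislePathLen, pathLen_cons_cons]
    linarith [dist_triangle (X a) (X b) (X c)]

variable {i i' : Fin n} {l l' : Fin 3} {r : List (TBV n m)} {V : List (Visit n)}

theorem RouteTo.vertLen_eq (h : RouteTo i' l' i l r V) (hG : IsGridMetric len X d) :
    vertLen len (art i l :: r) = V.length * d := by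
  change pathLen (fun x y => if isPickV x || isPickV y then len x y else 0) _ = _
  induction h with
  | nil => simp [pathLen_singleton]
  | horizontal _ _ ih => rw [pathLen_cons_cons, ih]; simp [isPickV, art]
  | @traverse i j dir r V _ ih =>
    have hdir : pathLen (fun x y => if isPickV x || isPickV y then len x y else 0)
        (dirPath i j dir) = d := by
      rw [← hG.pathLen_dirPath i j dir]
      exact pathLen_congr ((isChain_pick_dirPath i j dir).imp fun _ _ h => if_pos h)
    rw [pathLen_traverse, hdir, ih, List.length_cons]
    push_cast
    ring

theorem RouteTo.le_pathLen (h : RouteTo i' l' i l r V) (hG : IsGridMetric len X d)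
    {L : List (Fin n)} (hL : L.Sublist (V.map fun v => v.1.1)) :
    V.length * d + aislePathLen X (i :: (L ++ [i'])) ≤ pathLen len (art i l :: r) := by
  induction h generalizing L with
  | nil =>
    obtain rfl := List.sublist_nil.1 hL
    simp [aislePathLen, pathLen_cons_cons, pathLen_singleton]
  | @horizontal i₁ i₂ l _ _ h _ ih =>
    rw [pathLen_cons_cons, hG.len_art l h]
    linarith [ih hL, aislePathLen_cons_le X i₁ i₂ (L ++ [i'])]
  | @traverse i j dir r V _ ih =>
    rw [pathLen_traverse, hG.pathLen_dirPath, List.length_cons]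
    push_cast
    rcases List.sublist_cons_iff.1 hL with hL' | ⟨L', rfl, hL'⟩
    · linarith [ih hL']
    · have hdup : aislePathLen X (i :: (i :: L' ++ [i'])) = aislePathLen X (i :: (L' ++ [i'])) := by
        simp [aislePathLen, pathLen_cons_cons]
      linarith [ih hL']

theorem exists_neighbor_between (hX : Monotone X) {i₁ i₂ : Fin n} (h : i₁ ≠ i₂) :
    ∃ i₃ : Fin n, ((i₃ : ℕ) = i₁ + 1 ∨ (i₁ : ℕ) = i₃ + 1) ∧
      ((i₃ : ℤ) - i₂).natAbs < ((i₁ : ℤ) - i₂).natAbs ∧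
      dist (X i₁) (X i₃) + dist (X i₃) (X i₂) = dist (X i₁) (X i₂) := by
  rcases lt_or_gt_of_ne h with h | h <;> rw [Fin.lt_def] at h
  · refine ⟨⟨i₁ + 1, by lia⟩, Or.inl rfl, by simp only; lia, ?_⟩
    have h₁ := hX (show i₁ ≤ ⟨i₁ + 1, by lia⟩ from Nat.le_succ _)
    have h₂ := hX (show (⟨i₁ + 1, by lia⟩ : Fin n) ≤ i₂ from h)
    rw [dist_comm, dist_comm _ (X i₂), dist_comm _ (X i₂)]
    simp only [Real.dist_eq, abs_of_nonneg, sub_nonneg, h₁, h₂, h₁.trans h₂]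
    ring
  · refine ⟨⟨i₁ - 1, by lia⟩, Or.inr (by simp only; lia), by simp only; lia, ?_⟩
    have h₁ := hX (show (⟨i₁ - 1, by lia⟩ : Fin n) ≤ i₁ from Nat.sub_le _ _)
    have h₂ := hX (show i₂ ≤ (⟨i₁ - 1, by lia⟩ : Fin n) from Nat.le_sub_one_of_lt h)
    simp only [Real.dist_eq, abs_of_nonneg, sub_nonneg, h₁, h₂, h₂.trans h₁]
    ring

theorem RouteTo.exists_move {i₂ : Fin n} (h : RouteTo i' l' i₂ l r V) (hG : IsGridMetric len X d)
    (i₁ : Fin n) : ∃ r', RouteTo i' l' i₁ l r' V ∧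
      pathLen len (art i₁ l :: r') = dist (X i₁) (X i₂) + pathLen len (art i₂ l :: r) := by
  induction hN : ((i₁ : ℤ) - i₂).natAbs using Nat.strong_induction_on generalizing i₁ with
  | _ N ih =>
  subst hN
  rcases eq_or_ne i₁ i₂ with rfl | hne
  · exact ⟨r, h, by simp⟩
  · obtain ⟨i₃, hadj, hlt, hdist⟩ := exists_neighbor_between hG.monotone hne
    obtain ⟨r', hr', hlen⟩ := ih _ hlt i₃ rfl
    refine ⟨art i₃ l :: r', .horizontal hadj hr', ?_⟩
    rw [pathLen_cons_cons, hG.len_art l hadj, hlen, ← add_assoc, hdist]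

theorem Connects.exists_routeTo (h : Connects l' l V) (hG : IsGridMetric len X d) (i i' : Fin n) :
    ∃ r, RouteTo i' l' i l r V ∧ pathLen len (art i l :: r) =
      V.length * d + aislePathLen X (i :: (V.map (fun v => v.1.1) ++ [i'])) := by
  induction V generalizing i l with
  | nil =>
    obtain rfl := h
    obtain ⟨r, hr, hlen⟩ := (RouteTo.nil (m := m) (i' := i') (l' := l)).exists_move hG i
    exact ⟨r, hr, by simp [hlen, aislePathLen, pathLen_cons_cons, pathLen_singleton]⟩
  | cons v V ih =>
    obtain ⟨⟨a, j⟩, dir⟩ := v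
    obtain ⟨rfl, hV⟩ := h
    obtain ⟨r, hr, hlen⟩ := ih hV a
    obtain ⟨r', hr', hlen'⟩ := (RouteTo.traverse j dir hr).exists_move hG i
    refine ⟨r', hr', ?_⟩
    rw [hlen', pathLen_traverse, hG.pathLen_dirPath, hlen]
    simp only [aislePathLen, List.map_cons, List.cons_append, pathLen_cons_cons, List.length_cons]
    push_cast
    ring

end Metric

section Serpentine

/-- The list `l` with its last element repeated if this is needed for the length to have the same
parity as `ε`. -/
def padParity {α : Type*} (ε : ℕ) (l : List α) : List α :=
  l ++ if Even (l.length + ε) then [] else l.getLast?.toList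

theorem mem_padParity {α : Type*} {ε : ℕ} {l : List α} {x : α} : x ∈ padParity ε l ↔ x ∈ l := by
  rw [padParity, List.mem_append, or_iff_left_iff_imp]
  split_ifs
  · simp
  · rw [Option.mem_toList]
    exact List.mem_of_getLast?

theorem length_padParity {α : Type*} {l : List α} (hl : l ≠ []) (ε : ℕ) :
    (padParity ε l).length = l.length + (l.length + ε) % 2 := by
  rw [padParity, List.length_append]
  split_ifs with h
  · rw [Nat.even_iff.1 h, List.length_nil]
  · rw [Nat.not_even_iff.1 h, List.getLast?_eq_some_getLast hl]
    rfl

theorem even_length_padParity {α : Type*} {l : List α} (hl : l ≠ []) (ε : ℕ) :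
    Even (padParity ε l).length ↔ Even ε := by
  rw [length_padParity hl]
  grind

theorem aislePathLen_append_dup (X : Fin n → ℝ) (a : Fin n) (A B : List (Fin n)) :
    aislePathLen X (A ++ a :: a :: B) = aislePathLen X (A ++ a :: B) :=
  pathLen_append_dup (f := fun a b => dist (X a) (X b)) (dist_self _) A B

theorem aislePathLen_append_padParity (X : Fin n → ℝ) (ε : ℕ) (A l B : List (Fin n)) :
    aislePathLen X (A ++ padParity ε l ++ B) = aislePathLen X (A ++ l ++ B) := by
  rw [padParity]
  split_ifs
  · rw [List.append_nil]
  · rcases List.eq_nil_or_concat l with rfl | ⟨l, a, rfl⟩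
    · rfl
    · simpa using aislePathLen_append_dup X a (A ++ l) B

/-- The traversals of the subaisles of block `j` in the aisles of `l`, in this order and with
alternating directions, the first one being `dir`. -/
def serpentine (j : Fin 2) : Bool → List (Fin n) → List (Visit n)
  | _, [] => []
  | dir, a :: l => ((a, j), dir) :: serpentine j (!dir) l

theorem map_fst_serpentine (j : Fin 2) (dir : Bool) (l : List (Fin n)) :
    (serpentine j dir l).map Prod.fst = l.map fun a => (a, j) := by
  induction l generalizing dir with
  | nil => rfl
  | cons a l ih => rw [serpentine, List.map_cons, ih, List.map_cons]

theorem length_serpentine (j : Fin 2) (dir : Bool) (l : List (Fin n)) :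
    (serpentine j dir l).length = l.length := by
  simpa using congrArg List.length (map_fst_serpentine j dir l)

theorem serpentine_append (j : Fin 2) (dir : Bool) (l l' : List (Fin n)) :
    ∃ Q, serpentine j dir (l ++ l') = serpentine j dir l ++ Q := by
  induction l generalizing dir with
  | nil => exact ⟨_, rfl⟩
  | cons a l ih =>
    obtain ⟨Q, hQ⟩ := ih !dir
    exact ⟨Q, congrArg (((a, j), dir) :: ·) hQ⟩

theorem connects_serpentine (j : Fin 2) (dir : Bool) (l : List (Fin n)) :
    Connects (startLevel j (if Even l.length then dir else !dir)) (startLevel j dir)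
      (serpentine j dir l) := by
  induction l generalizing dir with
  | nil => rfl
  | cons a l ih =>
    refine ⟨rfl, ?_⟩
    convert ih !dir using 2
    simp only [List.length_cons, Nat.even_add_one, Bool.not_not]
    split_ifs <;> rfl

theorem firstDir_append_cons {P : List (Visit n)} {x : Fin n × Fin 2} (hx : x ∉ P.map Prod.fst)
    (dir : Bool) (Q : List (Visit n)) : firstDir (P ++ (x, dir) :: Q) x = dir := by
  have hP : P.lookup x = none := List.lookup_eq_none_iff.2 fun p hp =>
    bne_iff_ne.2 fun h => hx (h ▸ List.mem_map_of_mem hp)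
  simp [firstDir, List.lookup_append, hP]

theorem isChain_firstDir_serpentine {j : Fin 2} {l : List (Fin n)} (hl : l.Nodup)
    {P : List (Visit n)} (hP : ∀ a ∈ l, (a, j) ∉ P.map Prod.fst) (dir : Bool)
    (Q : List (Visit n)) : l.IsChain fun a a' =>
      firstDir (P ++ serpentine j dir l ++ Q) (a, j) ≠
        firstDir (P ++ serpentine j dir l ++ Q) (a', j) := by
  induction l generalizing P dir with
  | nil => exact List.isChain_nil
  | cons a l ih =>
    have hP' : ∀ b ∈ l, (b, j) ∉ (P ++ [((a, j), dir)]).map Prod.fst := by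
      have := hP
      grind
    have ih := ih hl.of_cons hP' (!dir)
    have hV : P ++ serpentine j dir (a :: l) ++ Q =
        P ++ [((a, j), dir)] ++ serpentine j (!dir) l ++ Q := by simp [serpentine]
    cases l with
    | nil => exact List.isChain_singleton _
    | cons b l =>
      rw [← hV] at ih
      refine List.isChain_cons_cons.2 ⟨?_, ih⟩
      have ha : firstDir (P ++ serpentine j dir (a :: b :: l) ++ Q) (a, j) = dir := by
        rw [serpentine, List.append_assoc]
        exact firstDir_append_cons (hP a List.mem_cons_self) _ _
      have hb : firstDir (P ++ serpentine j dir (a :: b :: l) ++ Q) (b, j) = !dir := by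
        rw [hV, serpentine, List.append_assoc]
        exact firstDir_append_cons (hP' b List.mem_cons_self) _ _
      rw [ha, hb]
      exact (Bool.not_ne_self dir).symm

theorem IsTimetable.isChain_firstPos_serpentine {r : List (TBV n m)} {P Q : List (Visit n)}
    {j : Fin 2} {dir : Bool} {l : List (Fin n)} {pos : ℕ → ℕ}
    (h : IsTimetable r (P ++ serpentine j dir l ++ Q) pos) (hl : l.Nodup)
    (hP : ∀ a ∈ l, (a, j) ∉ P.map Prod.fst) :
    l.IsChain fun a a' => firstPos r a j < firstPos r a' j := by
  have hmap : (P ++ serpentine j dir l ++ Q).map Prod.fst =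
      P.map Prod.fst ++ l.map (fun a => (a, j)) ++ Q.map Prod.fst := by
    rw [List.map_append, List.map_append, map_fst_serpentine]
  have hidx := pairwise_idxOf_lt (hl.map (Prod.mk_left_injective j)) (P := P.map Prod.fst)
    (by simpa using hP) (Q.map Prod.fst)
  have hmem : ∀ a ∈ l, (a, j) ∈ (P ++ serpentine j dir l ++ Q).map Prod.fst := by
    intro a ha
    rw [hmap]
    simp [ha]
  refine (List.Pairwise.imp_of_mem (fun ha hb hab => ?_) (List.pairwise_map.1 hidx)).isChain
  rwa [h.firstPos_lt_iff (hmem _ ha) (hmem _ hb), hmap]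

end Serpentine

section SShape

variable {K1 K2 : Finset (Fin n)} {hK1 : K1.Nonempty}

/-- The aisles whose top subaisles an S-shape route visits before turning to the second block:
all of `K1` but its leftmost aisle `i₀`, unless `K1 = {i₀}`, in which case subaisle `i₀` is the only
way to reach the middle cross-aisle. -/
def firstBlock (K1 : Finset (Fin n)) (hK1 : K1.Nonempty) : Finset (Fin n) :=
  if K1.erase (K1.min' hK1) = ∅ then K1 else K1.erase (K1.min' hK1)

theorem firstBlock_nonempty : (firstBlock K1 hK1).Nonempty := by
  rw [firstBlock]
  split_ifs with h
  · exact hK1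
  · exact Finset.nonempty_iff_ne_empty.2 h

theorem insert_min'_firstBlock : insert (K1.min' hK1) (firstBlock K1 hK1) = K1 := by
  rw [firstBlock]
  split_ifs
  · exact Finset.insert_eq_of_mem (K1.min'_mem hK1)
  · exact Finset.insert_erase (K1.min'_mem hK1)

theorem mem_of_mem_firstBlock {a : Fin n} (ha : a ∈ firstBlock K1 hK1) : a ∈ K1 :=
  insert_min'_firstBlock (hK1 := hK1) ▸ Finset.mem_insert_of_mem ha

theorem card_firstBlock_add :
    (firstBlock K1 hK1).card + ((firstBlock K1 hK1).card + 1) % 2 + 1 =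
      K1.card + K1.card % 2 := by
  have hcard := Finset.card_erase_add_one (K1.min'_mem hK1)
  rw [firstBlock]
  split_ifs with h
  · rw [h, Finset.card_empty] at hcard
    lia
  · lia

/-- The traversals of an optimal S-shape route. In order to end a block on the right cross-aisle it
repeats, if necessary, the last subaisle of that block. -/
def sShapeVisits (K1 K2 : Finset (Fin n)) (hK1 : K1.Nonempty) : List (Visit n) :=
  serpentine 0 true (padParity 1 ((firstBlock K1 hK1).sort (· ≤ ·))) ++
    serpentine 1 true (padParity 0 (K2.sort (· ≤ ·))) ++ [((K1.min' hK1, 0), false)]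

/-- The aisles visited by an S-shape route, in this order and without immediate repetitions. -/
def sShapeAisles (K1 K2 : Finset (Fin n)) (hK1 : K1.Nonempty) : List (Fin n) :=
  (firstBlock K1 hK1).sort (· ≤ ·) ++ K2.sort (· ≤ ·) ++ [K1.min' hK1]

theorem sort_ne_nil {K : Finset (Fin n)} (hK : K.Nonempty) : K.sort (· ≤ ·) ≠ [] := by
  rw [Ne, ← List.length_eq_zero_iff, Finset.length_sort]
  exact hK.card_ne_zero

theorem mem_map_fst_sShapeVisits {a : Fin n} {j : Fin 2} :
    (a, j) ∈ (sShapeVisits K1 K2 hK1).map Prod.fst ↔ (j = 0 ∧ a ∈ K1) ∨ (j = 1 ∧ a ∈ K2) := by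
  have hK : a ∈ K1 ↔ a = K1.min' hK1 ∨ a ∈ firstBlock K1 hK1 := by
    rw [← Finset.mem_insert, insert_min'_firstBlock]
  simp only [sShapeVisits, List.map_append, map_fst_serpentine, List.mem_append, List.mem_map,
    mem_padParity, Finset.mem_sort, List.map_singleton, List.mem_singleton, Prod.mk.injEq, hK]
  grind

theorem length_sShapeVisits (hK2 : K2.Nonempty) : (sShapeVisits K1 K2 hK1).length =
    K1.card + K1.card % 2 + (K2.card + K2.card % 2) := by
  rw [← card_firstBlock_add (hK1 := hK1)]
  simp only [sShapeVisits, List.length_append, length_serpentine, List.length_singleton,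
    length_padParity (sort_ne_nil hK2), length_padParity (sort_ne_nil firstBlock_nonempty),
    Finset.length_sort]
  lia

theorem connects_sShapeVisits (hK2 : K2.Nonempty) : Connects 0 0 (sShapeVisits K1 K2 hK1) := by
  have h1 := connects_serpentine 0 true (padParity 1 ((firstBlock K1 hK1).sort (· ≤ ·)))
  have h2 := connects_serpentine 1 true (padParity 0 (K2.sort (· ≤ ·)))
  rw [if_neg ((even_length_padParity (sort_ne_nil firstBlock_nonempty) 1).not.2
    Nat.not_even_one)] at h1
  rw [if_pos ((even_length_padParity (sort_ne_nil hK2) 0).2 Even.zero)] at h2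
  exact (h1.append h2).append ⟨rfl, rfl⟩

theorem aislePathLen_sShapeVisits (X : Fin n → ℝ) (s : Fin n) :
    aislePathLen X (s :: ((sShapeVisits K1 K2 hK1).map (fun v => v.1.1) ++ [s])) =
      aislePathLen X (s :: (sShapeAisles K1 K2 hK1 ++ [s])) := by
  have hserp (j : Fin 2) (l : List (Fin n)) :
      (serpentine j true l).map (fun v => v.1.1) = l := by
    simpa [Function.comp_def] using congrArg (List.map Prod.fst) (map_fst_serpentine j true l)
  simp only [sShapeVisits, sShapeAisles, List.map_append, hserp, List.map_singleton]
  have h1 := aislePathLen_append_padParity X 1 [s] ((firstBlock K1 hK1).sort (· ≤ ·))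
    (padParity 0 (K2.sort (· ≤ ·)) ++ [K1.min' hK1, s])
  have h2 := aislePathLen_append_padParity X 0 (s :: (firstBlock K1 hK1).sort (· ≤ ·))
    (K2.sort (· ≤ ·)) [K1.min' hK1, s]
  simp only [List.append_assoc, List.cons_append, List.nil_append] at h1 h2 ⊢
  rw [h1, h2]

theorem exists_eq_firstBlock_serpentine : ∃ Q, sShapeVisits K1 K2 hK1 =
    [] ++ serpentine 0 true ((firstBlock K1 hK1).sort (· ≤ ·)) ++ Q := by
  obtain ⟨Q, hQ⟩ := serpentine_append 0 true ((firstBlock K1 hK1).sort (· ≤ ·)) _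
  exact ⟨_, by rw [sShapeVisits, padParity, hQ, List.append_assoc, List.append_assoc]; rfl⟩

theorem exists_eq_secondBlock_serpentine : ∃ Q, sShapeVisits K1 K2 hK1 =
    serpentine 0 true (padParity 1 ((firstBlock K1 hK1).sort (· ≤ ·))) ++
      serpentine 1 true (K2.sort (· ≤ ·)) ++ Q := by
  obtain ⟨Q, hQ⟩ := serpentine_append 1 true (K2.sort (· ≤ ·)) _
  refine ⟨Q ++ [((K1.min' hK1, 0), false)], ?_⟩
  rw [sShapeVisits, padParity.eq_1 0, hQ]
  simp only [List.append_assoc]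

theorem firstBlock_eq_erase {a : Fin n} (ha : a ∈ K1.erase (K1.min' hK1)) :
    firstBlock K1 hK1 = K1.erase (K1.min' hK1) :=
  if_neg (Finset.ne_empty_of_mem ha)

theorem isChain_sort_erase_of_firstBlock {R : Fin n → Fin n → Prop}
    (h : ((firstBlock K1 hK1).sort (· ≤ ·)).IsChain R) :
    ((K1.erase (K1.min' hK1)).sort (· ≤ ·)).IsChain R := by
  rcases (K1.erase (K1.min' hK1)).eq_empty_or_nonempty with he | ⟨a, ha⟩
  · rw [he, Finset.sort_empty]
    exact List.isChain_nil
  · rwa [← firstBlock_eq_erase ha]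

theorem notMem_map_fst_firstSerpentine (dir : Bool) (l : List (Fin n)) (b : Fin n) :
    (b, 1) ∉ (serpentine 0 dir l).map Prod.fst := by
  simp [map_fst_serpentine]

section Timetable

variable {r : List (TBV n m)} {pos : ℕ → ℕ}

theorem IsTimetable.firstPos_lt_of_sShapeVisits {a b : Fin n}
    (h : IsTimetable r (sShapeVisits K1 K2 hK1) pos) (ha : a ∈ firstBlock K1 hK1) (hb : b ∈ K2) :
    firstPos r a 0 < firstPos r b 1 := by
  have ha' : (a, 0) ∈ (serpentine 0 true (padParity 1 ((firstBlock K1 hK1).sort (· ≤ ·)))).map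
      Prod.fst := by
    simpa [map_fst_serpentine, mem_padParity] using ha
  rw [h.firstPos_lt_iff (mem_map_fst_sShapeVisits.2 (.inl ⟨rfl, mem_of_mem_firstBlock ha⟩))
    (mem_map_fst_sShapeVisits.2 (.inr ⟨rfl, hb⟩)), sShapeVisits, List.append_assoc,
    List.map_append, List.idxOf_append_of_mem ha',
    List.idxOf_append_of_notMem (notMem_map_fst_firstSerpentine _ _ _)]
  exact Nat.lt_add_right _ (List.idxOf_lt_length_iff.2 ha')

theorem IsTimetable.sShape1 (h : IsTimetable r (sShapeVisits K1 K2 hK1) pos) :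
    SShape1 K1 K2 hK1 r := by
  obtain ⟨Q1, hQ1⟩ := exists_eq_firstBlock_serpentine (K1 := K1) (K2 := K2) (hK1 := hK1)
  obtain ⟨Q2, hQ2⟩ := exists_eq_secondBlock_serpentine (K1 := K1) (K2 := K2) (hK1 := hK1)
  have hnodup (K : Finset (Fin n)) : (K.sort (· ≤ ·)).Nodup := K.sort_nodup _
  refine ⟨fun q a j dir hq => ?_, isChain_sort_erase_of_firstBlock ?_, fun a ha b hb => ?_, ?_,
    ⟨fun a j => firstDir (sShapeVisits K1 K2 hK1) (a, j), fun a ha => ?_, fun b hb => ?_,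
      isChain_sort_erase_of_firstBlock ?_, ?_⟩, h.exists_last_iff.2 ⟨_, _, rfl⟩⟩
  · exact mem_map_fst_sShapeVisits.1 (h.traverses_iff.1 ⟨q, dir, hq⟩)
  · exact (hQ1 ▸ h).isChain_firstPos_serpentine (hnodup _) (fun _ _ => List.not_mem_nil)
  · exact h.firstPos_lt_of_sShapeVisits (firstBlock_eq_erase ha ▸ ha) hb
  · exact (hQ2 ▸ h).isChain_firstPos_serpentine (hnodup _)
      fun b _ => notMem_map_fst_firstSerpentine _ _ b
  · exact h.travAt_firstPos (mem_map_fst_sShapeVisits.2 (.inl ⟨rfl, ha⟩))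
  · exact h.travAt_firstPos (mem_map_fst_sShapeVisits.2 (.inr ⟨rfl, hb⟩))
  · rw [hQ1]
    exact isChain_firstDir_serpentine (hnodup _) (fun _ _ => List.not_mem_nil) _ _
  · rw [hQ2]
    exact isChain_firstDir_serpentine (hnodup _)
      (fun b _ => notMem_map_fst_firstSerpentine _ _ b) _ _

theorem IsTimetable.traversesAll (h : IsTimetable r (sShapeVisits K1 K2 hK1) pos) :
    TraversesAll K1 K2 r :=
  ⟨fun _ ha => h.traverses_iff.2 (mem_map_fst_sShapeVisits.2 (.inl ⟨rfl, ha⟩)),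
    fun _ hb => h.traverses_iff.2 (mem_map_fst_sShapeVisits.2 (.inr ⟨rfl, hb⟩))⟩

end Timetable

section Competitor

variable {r : List (TBV n m)} {V : List (Visit n)} {pos : ℕ → ℕ}

theorem IsTimetable.mem_map_fst_of_traversesAll (h : IsTimetable r V pos)
    (hr : TraversesAll K1 K2 r) {a : Fin n} {j : Fin 2}
    (ha : (j = 0 ∧ a ∈ K1) ∨ (j = 1 ∧ a ∈ K2)) : (a, j) ∈ V.map Prod.fst := by
  rcases ha with ⟨rfl, ha⟩ | ⟨rfl, ha⟩
  · exact h.traverses_iff.1 (hr.1 a ha)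
  · exact h.traverses_iff.1 (hr.2 a ha)

theorem Connects.block_eq_zero_of_cons {l' : Fin 3} {v : Visit n} (h : Connects l' 0 (v :: V)) :
    v.1.2 = 0 := by
  have hstart (j : Fin 2) (dir : Bool) (h : 0 = startLevel j dir) : j = 0 := by decide +revert
  exact hstart _ _ h.1

/- If `K1 = {i₀}`, then this holds because the first traversal starts on the top cross-aisle. -/
theorem SShape1.firstPos_lt (hS : SShape1 K1 K2 hK1 r) (h : IsTimetable r V pos)
    (hr : TraversesAll K1 K2 r) {l' : Fin 3} (hV : Connects l' 0 V) {a b : Fin n}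
    (ha : a ∈ firstBlock K1 hK1) (hb : b ∈ K2) : firstPos r a 0 < firstPos r b 1 := by
  have haK := mem_of_mem_firstBlock ha
  rcases (K1.erase (K1.min' hK1)).eq_empty_or_nonempty with he | ⟨c, hc⟩
  · rw [h.firstPos_lt_iff (h.mem_map_fst_of_traversesAll hr (.inl ⟨rfl, haK⟩))
      (h.mem_map_fst_of_traversesAll hr (.inr ⟨rfl, hb⟩))]
    cases V with
    | nil => simpa using h.mem_map_fst_of_traversesAll hr (.inr ⟨rfl, hb⟩)
    | cons v V =>
      obtain ⟨⟨c, j⟩, dir⟩ := v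
      obtain rfl : j = 0 := hV.block_eq_zero_of_cons
      obtain ⟨q, dir', hq⟩ := h.traverses_iff.2 (show (c, 0) ∈ _ from List.mem_cons_self)
      have hcK : c ∈ K1 := by simpa using hS.1 q c 0 dir' hq
      have hsub := ((Finset.erase_eq_empty_iff _ _).1 he).resolve_left hK1.ne_empty
      obtain rfl : c = a := Finset.card_le_one.1 (hsub ▸ Finset.card_singleton _).le c hcK a haK
      simp
  · exact hS.2.2.1 a (firstBlock_eq_erase hc ▸ ha) b hb

theorem SShape1.pairwise_firstPos (hS : SShape1 K1 K2 hK1 r) (h : IsTimetable r V pos)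
    (hr : TraversesAll K1 K2 r) {l' : Fin 3} (hV : Connects l' 0 V) :
    (((firstBlock K1 hK1).sort (· ≤ ·)).map (fun a => (a, (0 : Fin 2))) ++
      (K2.sort (· ≤ ·)).map fun b => (b, (1 : Fin 2))).Pairwise
        fun x y => firstPos r x.1 x.2 < firstPos r y.1 y.2 := by
  have hpw (j : Fin 2) {l : List (Fin n)}
      (hl : l.IsChain fun a a' => firstPos r a j < firstPos r a' j) :
      (l.map fun a => (a, j)).Pairwise fun x y => firstPos r x.1 x.2 < firstPos r y.1 y.2 := by
    have : IsTrans (Fin n) fun a a' => firstPos r a j < firstPos r a' j :=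
      ⟨fun _ _ _ => lt_trans⟩
    exact List.pairwise_map.2 hl.pairwise
  refine List.pairwise_append.2 ⟨hpw 0 ?_, hpw 1 hS.2.2.2.1, ?_⟩
  · rw [firstBlock]
    split_ifs with he
    · rw [((Finset.erase_eq_empty_iff _ _).1 he).resolve_left hK1.ne_empty, Finset.sort_singleton]
      exact List.isChain_singleton _
    · exact hS.2.1
  · simp only [List.mem_map, Finset.mem_sort]
    rintro _ ⟨a, ha, rfl⟩ _ ⟨b, hb, rfl⟩
    exact hS.firstPos_lt h hr hV ha hb

theorem SShape1.sShapeAisles_sublist (hS : SShape1 K1 K2 hK1 r) (h : IsTimetable r V pos)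
    (hr : TraversesAll K1 K2 r) {l' : Fin 3} (hV : Connects l' 0 V) (hK2 : K2.Nonempty) :
    (sShapeAisles K1 K2 hK1).Sublist (V.map fun v => v.1.1) := by
  have hpw := hS.pairwise_firstPos h hr hV
  set L := ((firstBlock K1 hK1).sort (· ≤ ·)).map (fun a => (a, (0 : Fin 2)))
  set M := (K2.sort (· ≤ ·)).map fun b => (b, (1 : Fin 2))
  have hmem : ∀ x ∈ L ++ M, x ∈ V.map Prod.fst := by
    rintro ⟨a, j⟩ hx
    refine h.mem_map_fst_of_traversesAll hr ?_
    simp only [L, M, List.mem_append, List.mem_map, Finset.mem_sort, Prod.mk.injEq] at hx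
    grind [mem_of_mem_firstBlock]
  have hsub : (L ++ M).Sublist (V.map Prod.fst) := by
    refine sublist_of_pairwise_lt_getElem? (k := (V.map Prod.fst).idxOf)
      (hpw.imp_of_mem fun hx hy hxy => (h.firstPos_lt_iff (hmem _ hx) (hmem _ hy)).1 hxy)
      fun x hx => List.getElem?_idxOf (hmem x hx)
  obtain ⟨W, dir, rfl⟩ := h.exists_last_iff.1 hS.2.2.2.2.2
  have hW : (L ++ M).Sublist (W.map Prod.fst) := by
    rw [List.map_append] at hsub
    refine sublist_of_sublist_concat hsub fun hlast => ?_
    have hM : M ≠ [] := fun hM => sort_ne_nil hK2 (List.map_eq_nil_iff.1 hM)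
    rw [List.getLast?_append_of_ne_nil _ hM] at hlast
    obtain ⟨_, -, hb⟩ := List.mem_map.1 (List.mem_of_getLast? hlast)
    simp at hb
  have := (hW.append_right [(K1.min' hK1, (0 : Fin 2))]).map Prod.fst
  simpa [L, M, sShapeAisles, Function.comp_def] using this

theorem SShape1.le_pathLen {len : TBV n m → TBV n m → ℝ} {X : Fin n → ℝ} {d : ℝ}
    (hS : SShape1 K1 K2 hK1 r) (hG : IsGridMetric len X d) (hd : 0 ≤ d) {s : Fin n}
    (hs : IsTourFrom (art s 0) r) (hrev : NoReversal r) (hr : TraversesAll K1 K2 r)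
    (hK2 : K2.Nonempty) :
    (sShapeVisits K1 K2 hK1).length * d +
      aislePathLen X (s :: ((sShapeVisits K1 K2 hK1).map (fun v => v.1.1) ++ [s])) ≤
        pathLen len r := by
  obtain ⟨hhead, hlast, hchain⟩ := hs
  obtain ⟨r, rfl⟩ := List.head?_eq_some_iff.1 hhead
  obtain ⟨V, hV⟩ := exists_routeTo hchain hlast hrev
  obtain ⟨pos, hpos⟩ := hV.exists_isTimetable
  have hlength : (sShapeVisits K1 K2 hK1).length ≤ V.length :=
    (length_sShapeVisits hK2).trans_le <| hV.connects.le_length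
      (fun a ha => hpos.mem_map_fst_of_traversesAll hr (.inl ⟨rfl, ha⟩))
      (fun b hb => hpos.mem_map_fst_of_traversesAll hr (.inr ⟨rfl, hb⟩))
  rw [aislePathLen_sShapeVisits]
  calc _ ≤ V.length * d + aislePathLen X (s :: (sShapeAisles K1 K2 hK1 ++ [s])) := by gcongr
    _ ≤ _ := hV.le_pathLen hG (hS.sShapeAisles_sublist hpos hr hV.connects hK2)

end Competitor

end SShape

theorem sshape1_vertical_distance_general
    {n : ℕ} {m : Fin n → Fin 2 → ℕ} (len : TBV n m → TBV n m → ℝ) (d : ℝ)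
    (hsymm : ∀ x y, len x y = len y x) (hnonneg : ∀ x y, Adj x y → 0 ≤ len x y)
    (hcross : ∀ i i' : Fin n, (i' : ℕ) = (i : ℕ) + 1 →
      ∀ j j' : Fin 3, len (art i j) (art i' j) = len (art i j') (art i' j'))
    (hvert : ∀ i j, pathLen len (subPath i j) = d)
    (K1 K2 : Finset (Fin n)) (hK1 : K1.Nonempty) (hK2 : K2.Nonempty) (s : Fin n) :
    ∃ r : List (TBV n m),
      IsTourFrom (art s 0) r ∧ NoReversal r ∧ TraversesAll K1 K2 r ∧ SShape1 K1 K2 hK1 r ∧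
      (∀ r', IsTourFrom (art s 0) r' → NoReversal r' → TraversesAll K1 K2 r' →
        SShape1 K1 K2 hK1 r' → pathLen len r ≤ pathLen len r') ∧
      ((Odd K1.card ∧ Odd K2.card →
        vertLen len r - ((K1.card + K2.card : ℕ) : ℝ) * d = 2 * d) ∧
       (Even K1.card ∧ Even K2.card →
        vertLen len r - ((K1.card + K2.card : ℕ) : ℝ) * d = 0) ∧
       ((Odd K1.card ∧ Even K2.card) ∨ (Even K1.card ∧ Odd K2.card) →
        vertLen len r - ((K1.card + K2.card : ℕ) : ℝ) * d = d)) := by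
  obtain ⟨X, hG⟩ := exists_isGridMetric hsymm hnonneg hcross hvert
  have hd : 0 ≤ d :=
    hvert s 0 ▸ pathLen_nonneg ((isChain_adj_dirPath s 0 true).imp fun _ _ => hnonneg _ _)
  obtain ⟨r, hr, hlen⟩ := (connects_sShapeVisits (hK1 := hK1) hK2).exists_routeTo hG s s
  obtain ⟨pos, hpos⟩ := hr.exists_isTimetable
  refine ⟨art s 0 :: r, hr.isTourFrom, hr.noReversal, hpos.traversesAll, hpos.sShape1,
    fun r' hs hrev htrav hS => hlen.trans_le (hS.le_pathLen hG hd hs hrev htrav hK2), ?_⟩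
  have hexcess : vertLen len (art s 0 :: r) - ((K1.card + K2.card : ℕ) : ℝ) * d =
      ((K1.card % 2 + K2.card % 2 : ℕ) : ℝ) * d := by
    rw [hr.vertLen_eq hG, length_sShapeVisits hK2]
    push_cast
    ring
  simp only [hexcess, Nat.odd_iff, Nat.even_iff]
  refine ⟨?_, ?_, ?_⟩
  · rintro ⟨h1, h2⟩
    norm_num [h1, h2]
  · rintro ⟨h1, h2⟩
    norm_num [h1, h2]
  · rintro (⟨h1, h2⟩ | ⟨h1, h2⟩) <;> norm_num [h1, h2]

/-- In a two-block warehouse graph (with symmetric positive edge lengths,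
corresponding horizontal edges on the three cross-aisles of equal lengths, and
every subaisle of the same vertical length `d`) under no-reversal routing,
assume the topmost-left subaisle `1` belongs to `K1`.  Then the S-shape route
`r_S^1` — an optimal no-reversal tour of type `r_S^1` traversing every
subaisle of `K1 ∪ K2` at least once — has total vertical distance `l` with:
`l − |K1 ∪ K2| · d = 2d` if `|K1|` and `|K2|` are both odd;
`l − |K1 ∪ K2| · d = 0` if `|K1|` and `|K2|` are both even; and
`l − |K1 ∪ K2| · d = d` if exactly one of `|K1|`, `|K2|` is odd. -/
theorem sshape1_vertical_distance
    {n : ℕ} {m : Fin (n + 1) → Fin 2 → ℕ}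
    (len : TBV (n + 1) m → TBV (n + 1) m → ℝ) (d : ℝ)
    (hsymm : ∀ x y, len x y = len y x)
    (hpos : ∀ x y, Adj x y → 0 < len x y)
    (hcross : ∀ (i i' : Fin (n + 1)), (i' : ℕ) = (i : ℕ) + 1 →
      ∀ j j' : Fin 3, len (art i j) (art i' j) = len (art i j') (art i' j'))
    (hvert : ∀ i j, pathLen len (subPath i j) = d)
    (K1 K2 : Finset (Fin (n + 1)))
    (h1 : (0 : Fin (n + 1)) ∈ K1) (hK2 : K2.Nonempty) :
    ∃ r : List (TBV (n + 1) m),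
      IsTourFrom (art 0 0) r ∧ NoReversal r ∧ TraversesAll K1 K2 r ∧
      SShape1 K1 K2 ⟨0, h1⟩ r ∧
      (∀ r', IsTourFrom (art 0 0) r' → NoReversal r' → TraversesAll K1 K2 r' →
        SShape1 K1 K2 ⟨0, h1⟩ r' → pathLen len r ≤ pathLen len r') ∧
      ((Odd K1.card ∧ Odd K2.card →
        vertLen len r - ((K1.card + K2.card : ℕ) : ℝ) * d = 2 * d) ∧
       (Even K1.card ∧ Even K2.card →
        vertLen len r - ((K1.card + K2.card : ℕ) : ℝ) * d = 0) ∧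
       ((Odd K1.card ∧ Even K2.card) ∨ (Even K1.card ∧ Odd K2.card) →
        vertLen len r - ((K1.card + K2.card : ℕ) : ℝ) * d = d)) :=
  sshape1_vertical_distance_general len d hsymm (fun x y h => (hpos x y h).le) hcross hvert K1 K2
    ⟨0, h1⟩ hK2 0

end TwoBlock
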